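/- Let G = (V,E) be a DAMG, R a commutative ring, q : E → R a normalized weight function with total path weight function s, A an R-module, and v : V → A a value function with Möbius transform w = v'. Define the Shapley value at each root r ∈ Rt(G) by Sh_r^{(G,q)}(v) := w^{∖(V∖Rt(G))}(r). Then: (1) (total path weight formula) Sh_r^{(G,q)}(v) = Σ_{y ∈ V} s(r|y) · v'(y); (2) (efficiency) Σ_{r ∈ Rt(G)} Sh_r^{(G,q)}(v) = Σ_{x ∈ V} v'(x); (3) (null root) if r ∈ Rt(G) satisfies v'(x) = 0 for all x ∈ Desc(r), then Sh_r^{(G,q)}(v) = 0; (4) (R-linearity) Sh_r^{(G,q)}(c₁·v₁ + c₂·v₂) = c₁·Sh_r^{(G,q)}(v₁) + c₂·Sh_r^{(G,q)}(v₂) for all c₁, c₂ ∈ R and v₁, v₂ : V → A; (5) (projection) for every subset S ⊆ V∖Rt(G) and every r ∈ Rt(G), Sh_r^{(G,q)}(v) = Sh_r^{(G^{∖S}, q^{∖S})}(v^{∖S}), where v^{∖S}(y) := Σ_{x ∈ Anc^{G^{∖S}}(y)} w^{∖S}(x). -/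

import Mathlib

open scoped Classical

/-- A directed multigraph: finite sets of vertices/edges with tail and head maps. -/
structure MGraph (V E : Type*) where
  tl : E → V
  hd : E → V

namespace MGraph

variable {V E R A : Type*}

/-- `G` is a directed acyclic multigraph (DAMG) if it admits a topological ordering,
i.e. a linear (injective) order on the vertices such that tails precede heads. -/
def IsDAMG (G : MGraph V E) : Prop :=
  ∃ ord : V → ℕ, Function.Injective ord ∧ ∀ e : E, ord (G.tl e) < ord (G.hd e)

/-- `G.IsPath x y l` : the list of edges `l` is a directed path from `x` to `y`. -/
def IsPath (G : MGraph V E) : V → V → List E → Prop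
  | x, y, [] => x = y
  | x, y, e :: es => G.tl e = x ∧ G.IsPath (G.hd e) y es

/-- the set `E(x,y)` of edges from `x` to `y` -/
def edges (G : MGraph V E) (x y : V) : Set E := {e | G.tl e = x ∧ G.hd e = y}

/-- there is a directed path from `x` to `y` (possibly trivial) -/
def Reaches (G : MGraph V E) (x y : V) : Prop := ∃ l : List E, G.IsPath x y l

/-- ancestors of `y` (including `y`) -/
def anc (G : MGraph V E) (y : V) : Set V := {x | G.Reaches x y}

/-- descendants of `x` (including `x`) -/
def desc (G : MGraph V E) (x : V) : Set V := {y | G.Reaches x y}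

/-- parents of `y` -/
def pa (G : MGraph V E) (y : V) : Set V := {x | ∃ e : E, G.tl e = x ∧ G.hd e = y}

/-- roots (sources) of `G` -/
def roots (G : MGraph V E) : Set V := {x | G.pa x = ∅}

/-- leaves (sinks) of `G` -/
def leaves (G : MGraph V E) : Set V := {x | ∀ e : E, G.tl e ≠ x}

/-- `π(x,y)` : the number of directed paths from `x` to `y` -/
noncomputable def nPaths (G : MGraph V E) (x y : V) : ℕ :=
  {l : List E | G.IsPath x y l}.ncard

/-- `π(y)` : the number of directed paths from roots to `y` -/
noncomputable def nPathsRt (G : MGraph V E) (y : V) : ℕ :=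
  ∑ᶠ r ∈ G.roots, G.nPaths r y

/-- pairwise weight `q(x|y) := Σ_{e ∈ E(x,y)} q(e)` -/
noncomputable def pw [AddCommMonoid R] (G : MGraph V E) (q : E → R) (x y : V) : R :=
  ∑ᶠ e ∈ G.edges x y, q e

/-- a weight function is normalized if pairwise weights into any non-root sum to 1 -/
def Normalized [CommRing R] (G : MGraph V E) (q : E → R) : Prop :=
  ∀ y : V, y ∉ G.roots → (∑ᶠ x : V, G.pw q x y) = 1

/-- `w` is the Möbius transform (synergy function) of `v` w.r.t. `G` -/
def IsMoebiusTransform [AddCommGroup A] (G : MGraph V E) (v w : V → A) : Prop :=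
  ∀ x : V, w x = v x - ∑ᶠ y ∈ G.anc x \ {x}, w y

/-- `μ` is the Möbius function of `G` -/
def IsMoebiusFunction (G : MGraph V E) (μ : V → V → ℤ) : Prop :=
  (∀ x y : V, x ∉ G.anc y → μ x y = 0) ∧
  (∀ x : V, μ x x = 1) ∧
  (∀ x y : V, x ∈ G.anc y → x ≠ y →
    μ x y = -(∑ᶠ z ∈ (G.desc x ∩ G.anc y) \ {y}, μ x z))

/-- `s` is the total path weight function of the edge weight function `q` -/
def IsTotalWeight [CommRing R] (G : MGraph V E) (q : E → R) (s : V → V → R) : Prop :=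
  (∀ x y : V, y ∉ G.desc x → s x y = 0) ∧
  (∀ x : V, s x x = 1) ∧
  (∀ x y : V, y ∈ G.desc x → y ≠ x → s x y = ∑ᶠ z ∈ G.pa y, s x z * G.pw q z y)

/-- `τ : V → R` is the extension of a root weight function via the recursion
`τ(y) = Σ_{z ∈ Pa(y)} τ(z)·ς(z,y)` for non-roots `y` -/
def IsRootExtension [CommRing R] (G : MGraph V E) (ς : E → R) (τ : V → R) : Prop :=
  ∀ y : V, y ∉ G.roots → τ y = ∑ᶠ z ∈ G.pa y, τ z * G.pw ς z y

/-- the list of vertices visited by a path starting at `x` -/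
def pathVerts (G : MGraph V E) (x : V) (l : List E) : List V := x :: l.map G.hd

/-- `X` is a horizontal subset of `G` : every directed path from a root to a leaf
contains exactly one element of `X` -/
def Horizontal (G : MGraph V E) (X : Set V) : Prop :=
  ∀ r ∈ G.roots, ∀ lf ∈ G.leaves, ∀ p : List E, G.IsPath r lf p →
    (G.pathVerts r p).countP (fun v => decide (v ∈ X)) = 1

/-- the path uniform weight function `q_G(e) := π(t(e))/π(h(e))` -/
noncomputable def pathUniform (G : MGraph V E) : E → ℚ :=
  fun e => (G.nPathsRt (G.tl e) : ℚ) / (G.nPathsRt (G.hd e) : ℚ)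

/-- the unanimity value function centred at `y` -/
noncomputable def zeta [CommRing R] (G : MGraph V E) (y : V) : V → R :=
  fun x => if x ∈ G.desc y then (1 : R) else 0

/-! ### Projection onto the complement of a single element -/

/-- the edge type of the projection `G^{∖z}` :
old edges avoiding `z`, together with a new edge for every pair of edges through `z` -/
def proj1E (G : MGraph V E) (z : V) : Type _ :=
  {e : E // G.tl e ≠ z ∧ G.hd e ≠ z} ⊕
  {p : E × E // G.hd p.1 = z ∧ G.tl p.2 = z ∧ G.tl p.1 ≠ z ∧ G.hd p.2 ≠ z}

/-- the projection `G^{∖z}` of `G` onto the complement of `z` -/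
def proj1 (G : MGraph V E) (z : V) : MGraph {x : V // x ≠ z} (G.proj1E z) where
  tl := Sum.elim (fun e => ⟨G.tl e.1, e.2.1⟩) (fun p => ⟨G.tl p.1.1, p.2.2.2.1⟩)
  hd := Sum.elim (fun e => ⟨G.hd e.1, e.2.2⟩) (fun p => ⟨G.hd p.1.2, p.2.2.2.2⟩)

/-- the projected weight function `q^{∖z}` -/
def proj1Q [CommRing R] (G : MGraph V E) (z : V) (q : E → R) : G.proj1E z → R :=
  Sum.elim (fun e => q e.1) (fun p => q p.1.1 * q p.1.2)

/-- the single-element projection `w^{∖z}(x) := w(x) + q(x|z)·w(z)` of a synergy function -/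
noncomputable def wProjOne [CommRing R] [AddCommGroup A] [Module R A]
    (G : MGraph V E) (q : E → R) (w : V → A) (z : V) : {x : V // x ≠ z} → A :=
  fun x => w x.1 + G.pw q x.1 z • w z

/-! ### Projection onto the complement of a subset -/

/-- consecutive edges of the list compose -/
def IsChain (G : MGraph V E) : List E → Prop
  | [] => True
  | [_] => True
  | e :: e' :: es => G.hd e = G.tl e' ∧ G.IsChain (e' :: es)

/-- the interior vertices of a path (all visited vertices except the endpoints) -/
def interior (G : MGraph V E) : List E → List V
  | [] => []
  | [_] => []
  | e :: e' :: es => G.hd e :: G.interior (e' :: es)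

/-- an edge of the projection `G^{∖S}` : a nonempty directed path of `G` whose
interior vertices lie in `S` and whose endpoints lie outside `S`
(iterating `E^{∖z}(x,y) := E(x,y) ⊔ (E(x,z) × E(z,y))` over the elements of `S`) -/
structure ProjEdge (G : MGraph V E) (S : Set V) where
  first : E
  rest : List E
  chain : G.IsChain (first :: rest)
  tl_notin : G.tl first ∉ S
  hd_notin : G.hd ((first :: rest).getLast (List.cons_ne_nil _ _)) ∉ S
  interior_mem : ∀ v ∈ G.interior (first :: rest), v ∈ S

/-- the projection `G^{∖S}` of `G` onto the complement of the subset `S` -/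
def projG (G : MGraph V E) (S : Set V) : MGraph {x : V // x ∉ S} (G.ProjEdge S) where
  tl := fun p => ⟨G.tl p.first, p.tl_notin⟩
  hd := fun p => ⟨G.hd ((p.first :: p.rest).getLast (List.cons_ne_nil _ _)), p.hd_notin⟩

/-- the projected weight function `q^{∖S}` (weights multiply along collapsed paths) -/
def projQ [CommRing R] (G : MGraph V E) (S : Set V) (q : E → R) :
    G.ProjEdge S → R :=
  fun p => ((p.first :: p.rest).map q).prod

/-! ### Iterated one-element projections of pairwise weights and synergy functions -/

/-- one projection step on pairwise weights: `q^{∖z}(x|y) = q(x|y) + q(x|z)·q(z|y)` -/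
def pwStep [CommRing R] (Q : V → V → R) (z : V) : V → V → R :=
  fun x y => Q x y + Q x z * Q z y

/-- one projection step on a synergy function: `w^{∖z}(x) = w(x) + q(x|z)·w(z)` -/
def wStep [CommRing R] [AddCommGroup A] [Module R A]
    (Q : V → V → R) (w : V → A) (z : V) : V → A :=
  fun x => w x + Q x z • w z

/-- iterated one-element projections along a list of vertices -/
def projIter [CommRing R] [AddCommGroup A] [Module R A] :
    List V → (V → V → R) → (V → A) → ((V → V → R) × (V → A))
  | [], Q, w => (Q, w)
  | z :: zs, Q, w => projIter zs (pwStep Q z) (wStep Q w z)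

/-! ### Subgraph on a subset of vertices -/

/-- edges of `G` with both endpoints in `S` -/
def subE (G : MGraph V E) (S : Set V) : Type _ := {e : E // G.tl e ∈ S ∧ G.hd e ∈ S}

/-- the subgraph of `G` on the vertex subset `S` -/
def subgraph (G : MGraph V E) (S : Set V) : MGraph ↥S (G.subE S) where
  tl := fun e => ⟨G.tl e.1, e.2.1⟩
  hd := fun e => ⟨G.hd e.1, e.2.2⟩

/-- the canonical identification `(V∖{z})∖{u} ≃ (V∖{u})∖{z}` -/
def swapCompl (z u : V) (hzu : z ≠ u) :
    {y : {x : V // x ≠ z} // y ≠ ⟨u, Ne.symm hzu⟩} ≃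
      {y : {x : V // x ≠ u} // y ≠ ⟨z, hzu⟩} where
  toFun y := ⟨⟨y.1.1, fun h => y.2 (Subtype.ext h)⟩, fun h => y.1.2 (congrArg Subtype.val h)⟩
  invFun y := ⟨⟨y.1.1, fun h => y.2 (Subtype.ext h)⟩, fun h => y.1.2 (congrArg Subtype.val h)⟩
  left_inv y := rfl
  right_inv y := rfl

end MGraph

/-!
Call `t` harmonic at `z` if `t(z) = Σ_y t(y)·q(y|z)`. The projection `W` of a synergy function `w`
onto the complement of `T` solves the triangular system `W(x) = w(x) + Σ_{z ∈ T} q(x|z)·W(z)`.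
Pairing this with a `t` that is harmonic on `T` shows that projecting preserves the total:
`Σ_y t(y)·w(y) = Σ_{y ∉ T} t(y)·W(y)`.

Let `T` be the set of non-roots. With `t = s(r|·)`, which is harmonic off `r` and so vanishes at
the other roots, this is the total path weight formula; with `t = 1`, which is harmonic at
non-roots by normalization, it is efficiency.

The weights `q^{∖S}(·|y)` solve the system for `T = S` with right-hand side `q(·|y)`, by
decomposing paths at their first edge. Hence, by the same pairing, harmonicity of `t` descends to
`G^{∖S}`, and both sides of the projection property equal `Σ_y s(r|y)·w(y)`.
-/

namespace MGraph

variable {V E R A : Type*}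

section Elimination

/-- A matrix of pairwise weights is strictly triangular along `ord` if its nonzero entries strictly
increase `ord`; this is what acyclicity of a multigraph means for its pairwise weights. -/
def StrictlyTriangular {α : Type*} [LT α] [Zero R] (ord : V → α) (Q : V → V → R) : Prop :=
  ∀ ⦃x y : V⦄, Q x y ≠ 0 → ord x < ord y

theorem StrictlyTriangular.diag_eq_zero {α : Type*} [Preorder α] [Zero R] {ord : V → α}
    {Q : V → V → R} (hQ : StrictlyTriangular ord Q) (x : V) : Q x x = 0 :=
  not_not.1 fun h => lt_irrefl _ (hQ h)

theorem StrictlyTriangular.pwStep {α : Type*} [Preorder α] [CommRing R] {ord : V → α}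
    {Q : V → V → R} (hQ : StrictlyTriangular ord Q) (z : V) :
    StrictlyTriangular ord (pwStep Q z) := by
  intro x y hxy
  by_cases hdirect : Q x y = 0
  · have hvia : Q x z * Q z y ≠ 0 := by simpa [MGraph.pwStep, hdirect] using hxy
    exact (hQ (left_ne_zero_of_mul hvia)).trans (hQ (right_ne_zero_of_mul hvia))
  · exact hQ hdirect

variable [CommRing R] [AddCommGroup A] [Module R A]

theorem projIter_eq_add_sum {α : Type*} [Preorder α] {ord : V → α} {Q : V → V → R}
    (hQ : StrictlyTriangular ord Q) (l : List V) (w : V → A) (x : V) :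
    (projIter l Q w).2 x = w x + (l.map fun z => Q x z • (projIter l Q w).2 z).sum := by
  induction l generalizing Q w x with
  | nil => simp [projIter]
  | cons z zs ih =>
    rw [projIter]
    set W := (projIter zs (MGraph.pwStep Q z) (wStep Q w z)).2
    have hstep (x : V) : W x = w x + (zs.map fun y => Q x y • W y).sum +
        Q x z • (w z + (zs.map fun y => Q z y • W y).sum) := by
      refine (ih (hQ.pwStep z) (wStep Q w z) x).trans ?_
      simp only [wStep, MGraph.pwStep, add_smul, mul_smul, List.sum_map_add, smul_add,
        List.smul_sum, List.map_map, Function.comp_def]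
      abel
    have hz : W z = w z + (zs.map fun y => Q z y • W y).sum := by
      simpa [hQ.diag_eq_zero z] using hstep z
    rw [List.map_cons, List.sum_cons, hz, hstep x]
    abel

theorem projIter_smul_add_smul (l : List V) (Q : V → V → R) (c₁ c₂ : R) (w₁ w₂ : V → A) (x : V) :
    (projIter l Q fun y => c₁ • w₁ y + c₂ • w₂ y).2 x =
      c₁ • (projIter l Q w₁).2 x + c₂ • (projIter l Q w₂).2 x := by
  induction l generalizing Q w₁ w₂ with
  | nil => rfl
  | cons z zs ih =>
    have hstep : wStep Q (fun y => c₁ • w₁ y + c₂ • w₂ y) z =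
        fun y => c₁ • wStep Q w₁ z y + c₂ • wStep Q w₂ z y := by
      funext y
      simp only [wStep, smul_add, smul_comm (Q y z)]
      abel
    rw [projIter, hstep]
    exact ih _ _ _

end Elimination

section Harmonic

variable [Fintype V]

/-- `t` is harmonic at `z` for the pairwise weights `Q` if it satisfies there the recursion
`t(z) = Σ_y t(y)·Q(y|z)` of total path weights. -/
def IsHarmonicAt [NonUnitalNonAssocSemiring R] (Q : V → V → R) (t : V → R) (z : V) : Prop :=
  t z = ∑ y, t y * Q y z

theorem sum_smul_eq_sum_compl_of_isHarmonicAt [Semiring R] [AddCommGroup A] [Module R A]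
    {Q : V → V → R} {t : V → R} {w W : V → A} {T : Finset V}
    (hW : ∀ x, W x = w x + ∑ z ∈ T, Q x z • W z) (ht : ∀ z ∈ T, IsHarmonicAt Q t z) :
    ∑ y, t y • w y = ∑ y ∈ Tᶜ, t y • W y := by
  have hpair : ∑ y, t y • ∑ z ∈ T, Q y z • W z = ∑ z ∈ T, t z • W z := by
    simp only [Finset.smul_sum, smul_smul]
    rw [Finset.sum_comm]
    refine Finset.sum_congr rfl fun z hz => ?_
    rw [← Finset.sum_smul, ← ht z hz]
  apply add_left_cancel (a := ∑ z ∈ T, t z • W z)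
  calc ∑ z ∈ T, t z • W z + ∑ y, t y • w y
      = ∑ y, t y • W y := by
        rw [← hpair, add_comm, ← Finset.sum_add_distrib]
        exact Finset.sum_congr rfl fun y _ => by rw [← smul_add, ← hW y]
    _ = ∑ z ∈ T, t z • W z + ∑ y ∈ Tᶜ, t y • W y := (Finset.sum_add_sum_compl T _).symm

theorem sum_smul_eq_sum_compl_projIter {α : Type*} [Preorder α] [CommRing R] [AddCommGroup A]
    [Module R A] {ord : V → α} {Q : V → V → R} (hQ : StrictlyTriangular ord Q) {l : List V}
    (hl : l.Nodup) {t : V → R} (ht : ∀ z ∈ l, IsHarmonicAt Q t z) (w : V → A) :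
    ∑ y, t y • w y = ∑ y ∈ l.toFinsetᶜ, t y • (projIter l Q w).2 y := by
  refine sum_smul_eq_sum_compl_of_isHarmonicAt (Q := Q) (fun x => ?_)
    fun z hz => ht z (List.mem_toFinset.1 hz)
  rw [List.sum_toFinset _ hl]
  exact projIter_eq_add_sum hQ l w x

end Harmonic

section Paths

theorem Reaches.hd_of_tl {G : MGraph V E} {x : V} {e : E} (h : G.Reaches x (G.tl e)) :
    G.Reaches x (G.hd e) := by
  obtain ⟨l, hl⟩ := h
  refine ⟨l ++ [e], ?_⟩
  induction l generalizing x with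
  | nil => exact ⟨hl.symm, rfl⟩
  | cons e' l ih => exact ⟨hl.1, ih hl.2⟩

theorem IsPath.add_length_le {G : MGraph V E} {ord : V → ℕ}
    (hord : ∀ e, ord (G.tl e) < ord (G.hd e)) {x y : V} {l : List E} (hl : G.IsPath x y l) :
    ord x + l.length ≤ ord y := by
  induction l generalizing x with
  | nil => exact (congrArg ord hl).le
  | cons e l ih =>
    obtain ⟨rfl, hl⟩ := hl
    have := hord e
    have := ih hl
    rw [List.length_cons]
    omega

theorem Reaches.lt_of_ne {G : MGraph V E} {ord : V → ℕ}
    (hord : ∀ e, ord (G.tl e) < ord (G.hd e)) {x y : V} (h : G.Reaches x y) (hxy : x ≠ y) :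
    ord x < ord y := by
  obtain ⟨_ | ⟨e, l⟩, hl⟩ := h
  · exact absurd hl hxy
  · have := hl.add_length_le hord
    rw [List.length_cons] at this
    omega

theorem IsDAMG.finite_setOf_isPath [Finite E] {G : MGraph V E} (hG : G.IsDAMG) (x y : V) :
    {l | G.IsPath x y l}.Finite := by
  obtain ⟨ord, -, hord⟩ := hG
  refine (List.finite_length_le E (ord y)).subset fun l hl => ?_
  exact (Nat.le_add_left _ _).trans (hl.add_length_le hord)

theorem isPath_cons_iff_isChain {G : MGraph V E} {x y : V} {e : E} {es : List E} :
    G.IsPath x y (e :: es) ↔ G.tl e = x ∧ G.IsChain (e :: es) ∧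
      G.hd ((e :: es).getLast (List.cons_ne_nil _ _)) = y := by
  induction es generalizing e x with
  | nil => simp [IsPath, IsChain]
  | cons e' es ih =>
    rw [IsPath, ih, IsChain, List.getLast_cons_cons]
    tauto

end Paths

section Moebius

variable [AddCommGroup A] {G : MGraph V E}

theorem IsMoebiusTransform.unique (hG : G.IsDAMG) {v w w' : V → A}
    (hw : G.IsMoebiusTransform v w) (hw' : G.IsMoebiusTransform v w') : w = w' := by
  obtain ⟨ord, -, hord⟩ := hG
  funext x
  induction x using (measure ord).wf.induction with
  | _ x ih =>
    rw [hw x, hw' x, finsum_mem_congr rfl fun y hy => ih y (Reaches.lt_of_ne hord hy.1 hy.2)]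

theorem IsMoebiusTransform.smul_add_smul [Finite V] [Semiring R] [Module R A]
    {v₁ v₂ w₁ w₂ : V → A} (h₁ : G.IsMoebiusTransform v₁ w₁) (h₂ : G.IsMoebiusTransform v₂ w₂)
    (c₁ c₂ : R) :
    G.IsMoebiusTransform (fun x => c₁ • v₁ x + c₂ • v₂ x) fun x => c₁ • w₁ x + c₂ • w₂ x := by
  intro x
  have hfin : (G.anc x \ {x}).Finite := Set.toFinite _
  dsimp only
  rw [finsum_mem_add_distrib hfin, ← smul_finsum_mem hfin, ← smul_finsum_mem hfin,
    h₁ x, h₂ x, smul_sub, smul_sub]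
  abel

end Moebius

section PairwiseWeights

variable {G : MGraph V E}

theorem pw_eq_zero_of_notMem_pa [AddCommMonoid R] (q : E → R) {x y : V} (h : x ∉ G.pa y) :
    G.pw q x y = 0 :=
  finsum_mem_eq_zero_of_forall_eq_zero fun e he => absurd ⟨e, he⟩ h

theorem pw_eq_zero_of_mem_roots [AddCommMonoid R] (q : E → R) (x : V) {y : V}
    (hy : y ∈ G.roots) : G.pw q x y = 0 :=
  pw_eq_zero_of_notMem_pa q fun hx => Set.notMem_empty x (hy ▸ hx)

theorem IsDAMG.exists_strictlyTriangular_pw [AddCommMonoid R] (hG : G.IsDAMG) (q : E → R) :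
    ∃ ord : V → ℕ, StrictlyTriangular ord (G.pw q) := by
  obtain ⟨ord, -, hord⟩ := hG
  refine ⟨ord, fun x y hxy => ?_⟩
  obtain ⟨e, rfl, rfl⟩ := not_not.1 fun hx => hxy (pw_eq_zero_of_notMem_pa q hx)
  exact hord e

variable [Fintype V] [CommRing R] {q : E → R}

theorem IsTotalWeight.isHarmonicAt {s : V → V → R} (hs : G.IsTotalWeight q s) {x y : V}
    (hyx : y ≠ x) : IsHarmonicAt (G.pw q) (s x) y := by
  have hpa : (Function.support fun z => s x z * G.pw q z y) ⊆ G.pa y := fun z hz =>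
    not_not.1 fun hzy => right_ne_zero_of_mul hz (pw_eq_zero_of_notMem_pa q hzy)
  rw [IsHarmonicAt]
  by_cases hy : y ∈ G.desc x
  · rw [hs.2.2 x y hy hyx, finsum_mem_def, Set.indicator_eq_self.2 hpa, finsum_eq_sum_of_fintype]
  · rw [hs.1 x y hy]
    refine (Finset.sum_eq_zero fun z _ => not_not.1 fun hz => ?_).symm
    obtain ⟨e, rfl, rfl⟩ := hpa hz
    exact left_ne_zero_of_mul hz (hs.1 x _ fun hx => hy (Reaches.hd_of_tl hx))

theorem Normalized.isHarmonicAt_one (hq : G.Normalized q) {y : V} (hy : y ∉ G.roots) :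
    IsHarmonicAt (G.pw q) 1 y := by
  simpa [IsHarmonicAt, finsum_eq_sum_of_fintype] using (hq y hy).symm

theorem projIter_root_eq_sum_of_isHarmonicAt [AddCommGroup A] [Module R A] (hG : G.IsDAMG)
    {l : List V} (hl : l.Nodup) (hmem : ∀ z, z ∈ l ↔ z ∉ G.roots) {r : V} (hr : r ∈ G.roots)
    {t : V → R} (htr : t r = 1) (ht : ∀ y, y ≠ r → IsHarmonicAt (G.pw q) t y) (w : V → A) :
    (projIter l (G.pw q) w).2 r = ∑ y, t y • w y := by
  obtain ⟨ord, hQ⟩ := hG.exists_strictlyTriangular_pw q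
  have hroot (y : V) (hy : y ∈ G.roots) (hyr : y ≠ r) : t y = 0 := by
    rw [ht y hyr]
    exact Finset.sum_eq_zero fun z _ => by rw [pw_eq_zero_of_mem_roots q z hy, mul_zero]
  have hnonroot (z : V) (hz : z ∈ l) : z ≠ r := fun h => (hmem z).1 hz (h ▸ hr)
  rw [sum_smul_eq_sum_compl_projIter hQ hl (fun z hz => ht z (hnonroot z hz)) w,
    Finset.sum_eq_single r, htr, one_smul]
  · intro y hy hyr
    have hyl : y ∉ l := by simpa using hy
    rw [hroot y (not_not.1 (mt (hmem y).2 hyl)) hyr, zero_smul]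
  · intro hrl
    exact absurd rfl (hnonroot r (by simpa using hrl))

end PairwiseWeights

section RootValues

variable [Finite V] [CommRing R] [AddCommGroup A] [Module R A] {G : MGraph V E} {q : E → R}

theorem IsTotalWeight.projIter_root_eq_finsum (hG : G.IsDAMG) {s : V → V → R}
    (hs : G.IsTotalWeight q s) {l : List V} (hl : l.Nodup) (hmem : ∀ z, z ∈ l ↔ z ∉ G.roots)
    {r : V} (hr : r ∈ G.roots) (w : V → A) :
    (projIter l (G.pw q) w).2 r = ∑ᶠ y, s r y • w y := by
  cases nonempty_fintype V
  rw [finsum_eq_sum_of_fintype]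
  exact projIter_root_eq_sum_of_isHarmonicAt hG hl hmem hr (hs.2.1 r)
    (fun y hy => hs.isHarmonicAt hy) w

theorem Normalized.finsum_roots_projIter_eq_finsum (hG : G.IsDAMG) (hq : G.Normalized q)
    {l : List V} (hl : l.Nodup) (hmem : ∀ z, z ∈ l ↔ z ∉ G.roots) (w : V → A) :
    ∑ᶠ r ∈ G.roots, (projIter l (G.pw q) w).2 r = ∑ᶠ x, w x := by
  cases nonempty_fintype V
  obtain ⟨ord, hQ⟩ := hG.exists_strictlyTriangular_pw q
  have hroots : G.roots = ↑(l.toFinsetᶜ : Finset V) := by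
    ext z
    simp [hmem]
  rw [hroots, finsum_mem_coe_finset, finsum_eq_sum_of_fintype]
  simpa using (sum_smul_eq_sum_compl_projIter hQ hl
    (fun z hz => hq.isHarmonicAt_one ((hmem z).1 hz)) w).symm

end RootValues

section Passage

/-- The nonempty directed paths from `x` to `y` with interior vertices in `S`. For endpoints outside
`S` these are the edges of `G^{∖S}`; endpoints in `S` are allowed so that such paths can be
decomposed at their first edge. -/
def passages (G : MGraph V E) (S : Set V) (x y : V) : Set (List E) :=
  {l | l ≠ [] ∧ G.IsPath x y l ∧ ∀ v ∈ G.interior l, v ∈ S}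

/-- What remains of a passage to `y` after a first edge with head `z`: nothing if that edge ends at
`y`, or a further passage if it ends in `S`. -/
def passageTails (G : MGraph V E) (S : Set V) (z y : V) : Set (List E) :=
  {l | l = [] ∧ z = y ∨ z ∈ S ∧ l ∈ G.passages S z y}

/-- The total weight of the passages from `x` to `y` through `S`, which extends the pairwise weights
of `G^{∖S}` to all vertices of `G`. -/
noncomputable def passageWeight [Semiring R] (G : MGraph V E) (S : Set V) (q : E → R)
    (x y : V) : R :=
  ∑ᶠ l ∈ G.passages S x y, (l.map q).prod

variable {G : MGraph V E} {S : Set V}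

theorem IsDAMG.finite_passages [Finite E] (hG : G.IsDAMG) (S : Set V) (x y : V) :
    (G.passages S x y).Finite :=
  (hG.finite_setOf_isPath x y).subset fun _ hl => hl.2.1

theorem IsDAMG.finite_passageTails [Finite E] (hG : G.IsDAMG) (S : Set V) (z y : V) :
    (G.passageTails S z y).Finite :=
  ((hG.finite_passages S z y).insert []).subset fun _ hl => hl.imp And.left And.right

theorem cons_mem_passages {x y : V} {e : E} {l : List E} :
    e :: l ∈ G.passages S x y ↔ G.tl e = x ∧ l ∈ G.passageTails S (G.hd e) y := by
  cases l with
  | nil => simp [passageTails, passages, IsPath, interior]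
  | cons e' l =>
    simp only [passageTails, passages, IsPath, interior, Set.mem_ofPred_eq, List.mem_cons,
      forall_eq_or_imp]
    tauto

theorem passages_eq_biUnion (G : MGraph V E) (S : Set V) (x y : V) :
    G.passages S x y =
      ⋃ e ∈ {e | G.tl e = x}, List.cons e '' G.passageTails S (G.hd e) y := by
  ext (_ | ⟨e, l⟩)
  · simp [passages]
  · simp [cons_mem_passages, and_comm]

theorem finsum_mul_comp_hd_eq_sum_pw_mul [Fintype V] [Finite E] [NonUnitalNonAssocSemiring R]
    (G : MGraph V E) (q : E → R) (f : V → R) (x : V) :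
    ∑ᶠ e ∈ {e | G.tl e = x}, q e * f (G.hd e) = ∑ z, G.pw q x z * f z := by
  have hfiber : {e | G.tl e = x} = ⋃ z, G.edges x z := by
    ext e
    simp [edges]
  have hdisj : Pairwise (Function.onFun Disjoint (G.edges x)) := fun a b hab =>
    Set.disjoint_left.2 fun e ha hb => hab (ha.2.symm.trans hb.2)
  rw [hfiber, finsum_mem_iUnion hdisj fun _ => Set.toFinite _, finsum_eq_sum_of_fintype]
  refine Finset.sum_congr rfl fun z _ => ?_
  rw [pw, finsum_mem_mul' _ _ (Set.toFinite _)]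
  exact finsum_mem_congr rfl fun e he => by rw [he.2]

theorem finsum_passageTails [AddCommMonoid R] {y z : V} (hfin : (G.passages S z y).Finite)
    (f : List E → R) :
    ∑ᶠ l ∈ G.passageTails S z y, f l =
      (if z = y then f [] else 0) + if z ∈ S then ∑ᶠ l ∈ G.passages S z y, f l else 0 := by
  have hset : G.passageTails S z y =
      (if z = y then {[]} else ∅) ∪ if z ∈ S then G.passages S z y else ∅ := by
    ext l
    split_ifs <;> simp_all [passageTails]
  have hdisj : Disjoint (if z = y then {[]} else ∅) (if z ∈ S then G.passages S z y else ∅) := by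
    split_ifs <;> simp [passages]
  rw [hset, finsum_mem_union hdisj]
  · split_ifs <;> simp
  · split_ifs <;> simp
  · split_ifs <;> simp [hfin]

theorem passageWeight_eq_add_sum [Fintype V] [Finite E] [Semiring R] (hG : G.IsDAMG)
    (S : Set V) (q : E → R) (x y : V) :
    G.passageWeight S q x y =
      G.pw q x y + ∑ z ∈ S.toFinset, G.pw q x z * G.passageWeight S q z y := by
  let tailWeight (z : V) : R := ∑ᶠ l ∈ G.passageTails S z y, (l.map q).prod
  have htail (z : V) : tailWeight z =
      (if z = y then 1 else 0) + if z ∈ S then G.passageWeight S q z y else 0 :=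
    finsum_passageTails (hG.finite_passages S z y) _
  have hdisj : {e | G.tl e = x}.PairwiseDisjoint
      fun e => List.cons e '' G.passageTails S (G.hd e) y := by
    intro a _ b _ hab
    refine Set.disjoint_left.2 ?_
    rintro _ ⟨l, -, rfl⟩ ⟨l', -, hl'⟩
    exact hab (List.cons.inj hl').1.symm
  calc G.passageWeight S q x y
      = ∑ᶠ e ∈ {e | G.tl e = x},
          ∑ᶠ l ∈ List.cons e '' G.passageTails S (G.hd e) y, (l.map q).prod := by
        rw [passageWeight, passages_eq_biUnion, finsum_mem_biUnion hdisj (Set.toFinite _)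
          fun e _ => (hG.finite_passageTails S _ y).image _]
    _ = ∑ᶠ e ∈ {e | G.tl e = x}, q e * tailWeight (G.hd e) :=
        finsum_mem_congr rfl fun e _ => by
          rw [finsum_mem_image List.cons_injective.injOn,
            mul_finsum_mem' _ _ (hG.finite_passageTails S _ y)]
          simp only [List.map_cons, List.prod_cons]
    _ = ∑ z, G.pw q x z * tailWeight z := finsum_mul_comp_hd_eq_sum_pw_mul G q tailWeight x
    _ = G.pw q x y + ∑ z ∈ S.toFinset, G.pw q x z * G.passageWeight S q z y := by
        simp [htail, mul_add, Finset.sum_add_distrib, ← Finset.sum_filter,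
          Set.filter_mem_univ_eq_toFinset]

end Passage

section Projection

variable {G : MGraph V E} {S : Set V}

theorem ProjEdge.isPath (p : G.ProjEdge S) :
    G.IsPath ((G.projG S).tl p) ((G.projG S).hd p) (p.first :: p.rest) :=
  isPath_cons_iff_isChain.2 ⟨rfl, p.chain, rfl⟩

theorem IsDAMG.projG (hG : G.IsDAMG) (S : Set V) : (G.projG S).IsDAMG := by
  obtain ⟨ord, hinj, hord⟩ := hG
  refine ⟨fun x => ord x, hinj.comp Subtype.val_injective, fun p => ?_⟩
  exact (Nat.lt_add_of_pos_right (Nat.succ_pos _)).trans_le (p.isPath.add_length_le hord)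

theorem mem_roots_projG {x : {x : V // x ∉ S}} (hx : x.1 ∈ G.roots) : x ∈ (G.projG S).roots := by
  refine Set.eq_empty_iff_forall_notMem.2 fun y => ?_
  rintro ⟨p, -, rfl⟩
  have hlast : G.tl ((p.first :: p.rest).getLast (List.cons_ne_nil _ _)) ∈
      G.pa ((G.projG S).hd p) := ⟨_, rfl, rfl⟩
  exact Set.notMem_empty _ (hx ▸ hlast)

theorem pw_projG [CommRing R] (S : Set V) (q : E → R) (x y : {x : V // x ∉ S}) :
    (G.projG S).pw (G.projQ S q) x y = G.passageWeight S q x y := by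
  refine finsum_mem_eq_of_bijOn (fun p => p.first :: p.rest) ⟨?_, ?_, ?_⟩ fun _ _ => rfl
  · rintro p ⟨rfl, rfl⟩
    exact ⟨List.cons_ne_nil _ _, p.isPath, p.interior_mem⟩
  · rintro ⟨e, es, _⟩ - ⟨e', es', _⟩ - h
    obtain ⟨rfl, rfl⟩ := List.cons.inj h
    rfl
  · rintro (_ | ⟨e, es⟩) ⟨hne, hpath, hint⟩
    · exact absurd rfl hne
    · obtain ⟨htl, hchain, hhd⟩ := isPath_cons_iff_isChain.1 hpath
      exact ⟨⟨e, es, hchain, htl ▸ x.2, hhd ▸ y.2, hint⟩, ⟨Subtype.ext htl, Subtype.ext hhd⟩, rfl⟩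

variable [Fintype V] [CommRing R] {q : E → R} {t : V → R}

theorem IsHarmonicAt.projG [Finite E] {y : {x : V // x ∉ S}} (hy : IsHarmonicAt (G.pw q) t y)
    (hG : G.IsDAMG) (hS : ∀ z ∈ S, IsHarmonicAt (G.pw q) t z) :
    IsHarmonicAt ((G.projG S).pw (G.projQ S q)) (fun x => t x) y := by
  calc t y = ∑ z, t z * G.pw q z y := hy
    _ = ∑ z ∈ S.toFinsetᶜ, t z * G.passageWeight S q z y :=
        sum_smul_eq_sum_compl_of_isHarmonicAt (W := fun z => G.passageWeight S q z y)
          (fun x => passageWeight_eq_add_sum hG S q x y) fun z hz => hS z (Set.mem_toFinset.1 hz)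
    _ = ∑ z : {x : V // x ∉ S}, t z * (G.projG S).pw (G.projQ S q) z y := by
        simp only [pw_projG]
        exact Finset.sum_subtype _ (by simp) _

theorem projIter_projG_root_eq_sum_of_isHarmonicAt [Finite E] [AddCommGroup A] [Module R A]
    (hG : G.IsDAMG) {lS : List V} (hlS : lS.Nodup) (hmemS : ∀ z, z ∈ lS ↔ z ∈ S)
    {l : List {x : V // x ∉ S}} (hl : l.Nodup) (hmem : ∀ x, x ∈ l ↔ x ∉ (G.projG S).roots)
    {r : V} (hr : r ∈ G.roots) (hrS : r ∉ S) (htr : t r = 1)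
    (ht : ∀ y, y ≠ r → IsHarmonicAt (G.pw q) t y) (w : V → A) :
    (projIter l ((G.projG S).pw (G.projQ S q)) fun x => (projIter lS (G.pw q) w).2 x).2
      ⟨r, hrS⟩ = ∑ y, t y • w y := by
  obtain ⟨ord, hQ⟩ := hG.exists_strictlyTriangular_pw q
  have htS (z : V) (hz : z ∈ S) : IsHarmonicAt (G.pw q) t z :=
    ht z (ne_of_mem_of_not_mem hz hrS)
  have htproj (y : {x : V // x ∉ S}) (hy : y ≠ ⟨r, hrS⟩) :
      IsHarmonicAt ((G.projG S).pw (G.projQ S q)) (fun x => t x) y :=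
    (ht y fun h => hy (Subtype.ext h)).projG hG htS
  rw [sum_smul_eq_sum_compl_projIter hQ hlS (fun z hz => htS z ((hmemS z).1 hz)) w,
    projIter_root_eq_sum_of_isHarmonicAt (hG.projG S) hl hmem (mem_roots_projG hr) htr htproj]
  exact (Finset.sum_subtype _ (by simp [hmemS]) fun y => t y • (projIter lS (G.pw q) w).2 y).symm

end Projection

end MGraph

/-- **Properties of Shapley values on `R`-PDAMGs.**
Let `q` be a normalized weight function on the DAMG `G` with total path weight
function `s`, and `w` the Möbius transform of `v`. The Shapley value of `v` at a
root `r` is `Sh_r^{(G,q)}(v) := w^{∖(V∖Rt(G))}(r)`, the iterated projection of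
`w` onto the complement of the non-roots (enumerated by the duplicate-free list
`l`). Then: (1) total path weight formula; (2) efficiency; (3) null root;
(4) `R`-linearity; (5) invariance under projection onto the complement of any
`S ⊆ V∖Rt(G)`. -/
theorem shapley_values_properties
    {V E R A : Type*} [Finite V] [Finite E] [CommRing R] [AddCommGroup A] [Module R A]
    (G : MGraph V E) (hG : G.IsDAMG)
    (q : E → R) (hq : G.Normalized q)
    (s : V → V → R) (hs : G.IsTotalWeight q s)
    (v w : V → A) (hw : G.IsMoebiusTransform v w)
    (l : List V) (hnd : l.Nodup) (hmem : ∀ z : V, z ∈ l ↔ z ∉ G.roots) :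
    -- (1) total path weight formula
    (∀ r ∈ G.roots,
      (MGraph.projIter l (G.pw q) w).2 r = ∑ᶠ y : V, s r y • w y) ∧
    -- (2) efficiency
    ((∑ᶠ r ∈ G.roots, (MGraph.projIter l (G.pw q) w).2 r) = ∑ᶠ x : V, w x) ∧
    -- (3) null root
    (∀ r ∈ G.roots, (∀ x ∈ G.desc r, w x = 0) →
      (MGraph.projIter l (G.pw q) w).2 r = 0) ∧
    -- (4) R-linearity
    (∀ (c₁ c₂ : R) (v₁ v₂ w₁ w₂ w₁₂ : V → A),
      G.IsMoebiusTransform v₁ w₁ → G.IsMoebiusTransform v₂ w₂ →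
      G.IsMoebiusTransform (fun x => c₁ • v₁ x + c₂ • v₂ x) w₁₂ →
      ∀ r ∈ G.roots,
        (MGraph.projIter l (G.pw q) w₁₂).2 r =
          c₁ • (MGraph.projIter l (G.pw q) w₁).2 r +
            c₂ • (MGraph.projIter l (G.pw q) w₂).2 r) ∧
    -- (5) projection property: `Sh_r^{(G,q)}(v) = Sh_r^{(G^{∖S},q^{∖S})}(v^{∖S})`,
    -- where the Möbius transform of `v^{∖S}` w.r.t. `G^{∖S}` is `w^{∖S}`
    (∀ (S : Set V) (hS : ∀ z ∈ S, z ∉ G.roots)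
      (lS : List V), lS.Nodup → (∀ z : V, z ∈ lS ↔ z ∈ S) →
      ∀ (l' : List {x : V // x ∉ S}), l'.Nodup →
        (∀ x : {x : V // x ∉ S}, x ∈ l' ↔ x ∉ (G.projG S).roots) →
      ∀ (r : V) (hr : r ∈ G.roots),
        (MGraph.projIter l (G.pw q) w).2 r =
          (MGraph.projIter l' ((G.projG S).pw (G.projQ S q))
              (fun x => (MGraph.projIter lS (G.pw q) w).2 x.1)).2
            ⟨r, fun hmemS => hS r hmemS hr⟩) := by
  cases nonempty_fintype V
  have htotal (w : V → A) (r : V) (hr : r ∈ G.roots) :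
      (MGraph.projIter l (G.pw q) w).2 r = ∑ᶠ y : V, s r y • w y :=
    hs.projIter_root_eq_finsum hG hnd hmem hr w
  refine ⟨htotal w, hq.finsum_roots_projIter_eq_finsum hG hnd hmem w, ?_, ?_, ?_⟩
  · intro r hr hnull
    rw [htotal w r hr]
    refine finsum_eq_zero_of_forall_eq_zero fun y => ?_
    by_cases hy : y ∈ G.desc r
    · rw [hnull y hy, smul_zero]
    · rw [hs.1 r y hy, zero_smul]
  · intro c₁ c₂ v₁ v₂ w₁ w₂ w₁₂ hw₁ hw₂ hw₁₂ r _
    rw [hw₁₂.unique hG (hw₁.smul_add_smul hw₂ c₁ c₂)]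
    exact MGraph.projIter_smul_add_smul l (G.pw q) c₁ c₂ w₁ w₂ r
  · intro S hS lS hlS hmemS l' hl' hmem' r hr
    rw [htotal w r hr, finsum_eq_sum_of_fintype]
    exact (MGraph.projIter_projG_root_eq_sum_of_isHarmonicAt hG hlS hmemS hl' hmem' hr _
      (hs.2.1 r) (fun y hy => hs.isHarmonicAt hy) w).symm
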